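/- Separation theorem, direct part (Theorem 6.5, part 1, spectral form). Let V = {Vⁿ} be a general source and W = {Wⁿ} a general channel. If there exists a channel input X = {Xⁿ} (a sequence of distributions P_{Xⁿ} on 𝒳ⁿ, with Yⁿ the channel output of Wⁿ on input Xⁿ) such that H̄(V) < I_(X;Y), then V is transmissible over W. -/

import Mathlib

open Filter Real Topology

namespace ISC

/-- Words of length `n` over alphabet `A`. -/
abbrev Word (A : Type*) (n : ℕ) : Type _ := Fin n → A

/-- `p` is a probability mass function. -/
def IsPMF {α : Type*} (p : α → ℝ) : Prop :=
  (∀ a, 0 ≤ p a) ∧ HasSum p 1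

/-- Probability of the event `S` under the pmf `p`. -/
noncomputable def prob {α : Type*} (p : α → ℝ) (S : Set α) : ℝ :=
  ∑' a, S.indicator p a

/-- Output marginal `P_{Yⁿ}` of the channel `W` fed with the joint input law `P_{VⁿXⁿ}`. -/
noncomputable def outDist {𝒱 𝒳 𝒴 : Type*} {n : ℕ}
    (PVX : Word 𝒱 n × Word 𝒳 n → ℝ) (W : Word 𝒳 n → Word 𝒴 n → ℝ)
    (y : Word 𝒴 n) : ℝ :=
  ∑' vx : Word 𝒱 n × Word 𝒳 n, PVX vx * W vx.2 y

/-- Joint law of `(Vⁿ, Xⁿ, Yⁿ)`: `P_{VⁿXⁿ}(v,x) · Wⁿ(y|x)`. -/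
noncomputable def jointLaw {𝒱 𝒳 𝒴 : Type*} {n : ℕ}
    (PVX : Word 𝒱 n × Word 𝒳 n → ℝ) (W : Word 𝒳 n → Word 𝒴 n → ℝ) :
    Word 𝒱 n × Word 𝒳 n × Word 𝒴 n → ℝ :=
  fun z => PVX (z.1, z.2.1) * W z.2.1 z.2.2

/-- The joint input law `P_{VⁿXⁿ}` induced by the deterministic encoder `φ`:
`P_{Vⁿ}(v) 1{x = φ(v)}`. -/
noncomputable def codeInput {𝒱 𝒳 : Type*} [DecidableEq 𝒳] {n : ℕ} (PV : Word 𝒱 n → ℝ)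
    (φ : Word 𝒱 n → Word 𝒳 n) : Word 𝒱 n × Word 𝒳 n → ℝ :=
  fun vx => if vx.2 = φ vx.1 then PV vx.1 else 0

/-- Error probability `εₙ` of the joint source-channel code `(φ, ψ)`. -/
noncomputable def errProb {𝒱 𝒳 𝒴 : Type*} {n : ℕ}
    (PV : Word 𝒱 n → ℝ) (W : Word 𝒳 n → Word 𝒴 n → ℝ)
    (φ : Word 𝒱 n → Word 𝒳 n) (ψ : Word 𝒴 n → Word 𝒱 n) : ℝ :=
  ∑' v, PV v * prob (W (φ v)) {y | ψ y ≠ v}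

/-- `V` is transmissible over `W`. -/
def Transmissible {𝒱 𝒳 𝒴 : Type*} (PV : (n : ℕ) → Word 𝒱 n → ℝ)
    (W : (n : ℕ) → Word 𝒳 n → Word 𝒴 n → ℝ) : Prop :=
  ∃ (φ : (n : ℕ) → Word 𝒱 n → Word 𝒳 n) (ψ : (n : ℕ) → Word 𝒴 n → Word 𝒱 n),
    Tendsto (fun n => errProb (PV n) (W n) (φ n) (ψ n)) atTop (nhds 0)

/-- Output marginal of the channel `W` for an input distribution `P_{Xⁿ}`. -/
noncomputable def outDistX {𝒳 𝒴 : Type*} {n : ℕ}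
    (PX : Word 𝒳 n → ℝ) (W : Word 𝒳 n → Word 𝒴 n → ℝ) (y : Word 𝒴 n) : ℝ :=
  ∑' x : Word 𝒳 n, PX x * W x y

/-- Joint law of `(Xⁿ, Yⁿ)`: `P_{Xⁿ}(x) · Wⁿ(y|x)`. -/
noncomputable def jointXY {𝒳 𝒴 : Type*} {n : ℕ}
    (PX : Word 𝒳 n → ℝ) (W : Word 𝒳 n → Word 𝒴 n → ℝ) :
    Word 𝒳 n × Word 𝒴 n → ℝ :=
  fun z => PX z.1 * W z.1 z.2

/-- Limit superior in probability of a sequence of random variables `Z i`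
distributed according to the pmfs `p i`. -/
noncomputable def plimsup {α : ℕ → Type*} (p : (i : ℕ) → α i → ℝ)
    (Z : (i : ℕ) → α i → ℝ) : EReal :=
  sInf {β : EReal |
    Tendsto (fun i => prob (p i) {a | β < (Z i a : EReal)}) atTop (nhds 0)}

/-- Limit inferior in probability of a sequence of random variables `Z i`
distributed according to the pmfs `p i`. -/
noncomputable def pliminf {α : ℕ → Type*} (p : (i : ℕ) → α i → ℝ)
    (Z : (i : ℕ) → α i → ℝ) : EReal :=
  sSup {β : EReal |
    Tendsto (fun i => prob (p i) {a | (Z i a : EReal) < β}) atTop (nhds 0)}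

/-- Spectral sup-entropy rate `H̄(V)`. -/
noncomputable def Hbar {𝒱 : Type*} (PV : (n : ℕ) → Word 𝒱 n → ℝ) : EReal :=
  plimsup (fun n => PV n) (fun n v => (1 / (n : ℝ)) * Real.log (1 / PV n v))

/-- Spectral inf-entropy rate `H_(V)`. -/
noncomputable def Hlow {𝒱 : Type*} (PV : (n : ℕ) → Word 𝒱 n → ℝ) : EReal :=
  pliminf (fun n => PV n) (fun n v => (1 / (n : ℝ)) * Real.log (1 / PV n v))

/-- Spectral inf-information rate `I_(X;Y)` of the channel `W` with input `X`. -/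
noncomputable def Ilow {𝒳 𝒴 : Type*} (PX : (n : ℕ) → Word 𝒳 n → ℝ)
    (W : (n : ℕ) → Word 𝒳 n → Word 𝒴 n → ℝ) : EReal :=
  pliminf (fun n => jointXY (PX n) (W n))
    (fun n z => (1 / (n : ℝ)) * Real.log (W n z.1 z.2 / outDistX (PX n) (W n) z.2))

/-- Spectral sup-information rate `Ī(X;Y)` of the channel `W` with input `X`. -/
noncomputable def Ihigh {𝒳 𝒴 : Type*} (PX : (n : ℕ) → Word 𝒳 n → ℝ)
    (W : (n : ℕ) → Word 𝒳 n → Word 𝒴 n → ℝ) : EReal :=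
  plimsup (fun n => jointXY (PX n) (W n))
    (fun n z => (1 / (n : ℝ)) * Real.log (W n z.1 z.2 / outDistX (PX n) (W n) z.2))

/-- `sup_X I_(X;Y)`: the supremum over all channel inputs. -/
noncomputable def supIlow {𝒳 𝒴 : Type*}
    (W : (n : ℕ) → Word 𝒳 n → Word 𝒴 n → ℝ) : EReal :=
  ⨆ PX : {PX : (n : ℕ) → Word 𝒳 n → ℝ // ∀ n, IsPMF (PX n)}, Ilow PX.1 W

/-!
Separating `H̄(V) < a < b < I_(X;Y)`, with high probability the source word is one of the at most
`exp (n * a)` words of probability at least `exp (-(n * a))`. Feinstein's greedy construction gives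
each of these a codeword: the set of outputs `y` with `P_Y(y) ≤ exp (-(n * b)) * W(y|x)` has output
probability at most `exp (-(n * b))` for every input `x`. So after `exp (n * a)` codewords the
outputs already claimed weigh at most `exp (-(n * (b - a)))`, and averaging over `Xⁿ` finds an input
that sends almost all of its mass to unclaimed outputs of high information density.
-/

section Prob

variable {α ι : Type*} {p : α → ℝ} {S T : Set α}

lemma prob_nonneg (hp : ∀ a, 0 ≤ p a) (S : Set α) : 0 ≤ prob p S :=
  tsum_nonneg (Set.indicator_nonneg fun a _ => hp a)

lemma prob_le_prob_of_forall_pos (hp : ∀ a, 0 ≤ p a) (hs : Summable p)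
    (h : ∀ a ∈ S, 0 < p a → a ∈ T) : prob p S ≤ prob p T := by
  refine (hs.indicator S).tsum_le_tsum (fun a => ?_) (hs.indicator T)
  refine Set.indicator_le' (fun a ha => ?_) (fun a _ => Set.indicator_nonneg (fun a _ => hp a) a) a
  rcases (hp a).eq_or_lt with h0 | hpos
  · exact h0.symm.trans_le (Set.indicator_nonneg (fun a _ => hp a) a)
  · rw [Set.indicator_of_mem (h a ha hpos)]

lemma prob_mono (hp : ∀ a, 0 ≤ p a) (hs : Summable p) (h : S ⊆ T) : prob p S ≤ prob p T :=
  prob_le_prob_of_forall_pos hp hs fun _ ha _ => h ha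

lemma prob_union_le (hp : ∀ a, 0 ≤ p a) (hs : Summable p) (S T : Set α) :
    prob p (S ∪ T) ≤ prob p S + prob p T := by
  have hST : (S ∪ T).indicator p + (S ∩ T).indicator p = S.indicator p + T.indicator p :=
    Set.indicator_union_add_inter p S T
  unfold prob
  rw [← (hs.indicator S).tsum_add (hs.indicator T)]
  refine (hs.indicator _).tsum_le_tsum (fun a => ?_) ((hs.indicator S).add (hs.indicator T))
  exact (le_add_of_nonneg_right (Set.indicator_nonneg (fun a _ => hp a) a)).trans_eq
    (congrFun hST a)

lemma prob_le_prob_diff_add (hp : ∀ a, 0 ≤ p a) (hs : Summable p) (S T : Set α) :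
    prob p S ≤ prob p (S \ T) + prob p T :=
  (prob_mono hp hs (Set.subset_sdiff_union S T)).trans (prob_union_le hp hs _ _)

lemma prob_biUnion_finset_le (hp : ∀ a, 0 ≤ p a) (hs : Summable p) (I : Finset ι)
    (S : ι → Set α) : prob p (⋃ i ∈ I, S i) ≤ ∑ i ∈ I, prob p (S i) := by
  classical
  induction I using Finset.induction_on with
  | empty => simp [prob]
  | insert i I hi ih =>
    rw [Finset.sum_insert hi, Finset.set_biUnion_insert]
    exact (prob_union_le hp hs _ _).trans (add_le_add_right ih _)

lemma IsPMF.prob_add_prob_compl (hp : IsPMF p) (S : Set α) : prob p S + prob p Sᶜ = 1 := by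
  have hs := hp.2.summable
  unfold prob
  rw [← (hs.indicator S).tsum_add (hs.indicator Sᶜ), ← hp.2.tsum_eq]
  exact tsum_congr (congrFun (Set.indicator_self_add_compl S p))

lemma IsPMF.prob_le_one (hp : IsPMF p) (S : Set α) : prob p S ≤ 1 := by
  linarith [hp.prob_add_prob_compl S, prob_nonneg hp.1 Sᶜ]

lemma IsPMF.exists_pos (hp : IsPMF p) : ∃ a, 0 < p a := by
  by_contra! h
  have hzero : p = 0 := funext fun a => (h a).antisymm (hp.1 a)
  exact zero_ne_one (hasSum_zero.unique (hzero ▸ hp.2))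

lemma IsPMF.nonempty (hp : IsPMF p) : Nonempty α :=
  hp.exists_pos.nonempty

lemma IsPMF.exists_ge_of_hasSum_mul (hp : IsPMF p) {f : α → ℝ} {m : ℝ}
    (hf : HasSum (fun a => p a * f a) m) : ∃ a, m ≤ f a := by
  by_contra! h
  obtain ⟨a, ha⟩ := hp.exists_pos
  have hm : HasSum (fun a => p a * m) m := by simpa using hp.2.mul_right m
  exact lt_irrefl m <| hasSum_lt (fun a => mul_le_mul_of_nonneg_left (h a).le (hp.1 a))
    (mul_lt_mul_of_pos_left (h a) ha) hf hm

lemma finite_setOf_le_of_summable (hp : Summable p) {s : ℝ} (hs : 0 < s) :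
    {a | s ≤ p a}.Finite := by
  simpa [Filter.eventually_cofinite] using
    hp.tendsto_cofinite_zero.eventually (gt_mem_nhds hs)

lemma IsPMF.card_mul_le_one (hp : IsPMF p) {s : ℝ} {F : Finset α} (hF : ∀ a ∈ F, s ≤ p a) :
    F.card * s ≤ 1 :=
  calc F.card * s = F.card • s := (nsmul_eq_mul _ _).symm
    _ ≤ ∑ a ∈ F, p a := Finset.card_nsmul_le_sum _ _ _ hF
    _ ≤ 1 := sum_le_hasSum F (fun a _ => hp.1 a) hp.2

end Prob

section Channel

variable {α β : Type*}

/-- Joint law `P_X(x) W(y|x)` of the input and output of a channel on arbitrary alphabets;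
the one-shot form of `jointXY`. -/
noncomputable def channelJoint (P : α → ℝ) (W : α → β → ℝ) : α × β → ℝ :=
  fun z => P z.1 * W z.1 z.2

/-- Output marginal `P_Y` of a channel on arbitrary alphabets; the one-shot form of `outDistX`. -/
noncomputable def channelOutput (P : α → ℝ) (W : α → β → ℝ) : β → ℝ :=
  fun y => ∑' x, P x * W x y

/-- The pairs `(x, y)` of information density `log (W(y|x) / P_Y(y))` at least `log (1 / t)`,
written without division so that zero probabilities need no convention. -/
def highDensityPairs (P : α → ℝ) (W : α → β → ℝ) (t : ℝ) : Set (α × β) :=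
  {z | channelOutput P W z.2 ≤ t * W z.1 z.2}

variable {P : α → ℝ} {W : α → β → ℝ} {t : ℝ}

lemma isPMF_channelJoint (hP : IsPMF P) (hW : ∀ x, IsPMF (W x)) : IsPMF (channelJoint P W) := by
  have hnonneg : 0 ≤ channelJoint P W := fun z => mul_nonneg (hP.1 z.1) ((hW z.1).1 z.2)
  have hfiber : ∀ x, HasSum (fun y => channelJoint P W (x, y)) (P x) := fun x => by
    simpa [channelJoint] using (hW x).2.mul_left (P x)
  have hsummable : Summable (channelJoint P W) :=
    (summable_prod_of_nonneg hnonneg).2 ⟨fun x => (hfiber x).summable, by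
      simpa only [(hfiber _).tsum_eq] using hP.2.summable⟩
  refine ⟨hnonneg, ?_⟩
  rw [← (hsummable.hasSum.prod_fiberwise hfiber).unique hP.2]
  exact hsummable.hasSum

lemma hasSum_mul_prob_section (hP : IsPMF P) (hW : ∀ x, IsPMF (W x)) (A : Set (α × β)) :
    HasSum (fun x => P x * prob (W x) (Prod.mk x ⁻¹' A)) (prob (channelJoint P W) A) := by
  have hs := (isPMF_channelJoint hP hW).2.summable.indicator A
  have hsection : ∀ x, P x * prob (W x) (Prod.mk x ⁻¹' A)
      = ∑' y, A.indicator (channelJoint P W) (x, y) := fun x => by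
    rw [prob, ← tsum_mul_left]
    refine tsum_congr fun y => ?_
    by_cases h : (x, y) ∈ A <;> simp [h, channelJoint]
  simp only [hsection]
  exact hs.hasSum.prod_fiberwise fun x => (hs.prod_factor x).hasSum

lemma isPMF_channelOutput (hP : IsPMF P) (hW : ∀ x, IsPMF (W x)) :
    IsPMF (channelOutput P W) := by
  have hJ := isPMF_channelJoint hP hW
  have hswap : HasSum (channelJoint P W ∘ Prod.swap) 1 := (Equiv.prodComm β α).hasSum_iff.2 hJ.2
  exact ⟨fun y => tsum_nonneg fun x => hJ.1 (x, y),
    hswap.prod_fiberwise fun y => (hswap.summable.prod_factor y).hasSum⟩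

lemma prob_channelJoint_preimage_snd (hP : IsPMF P) (hW : ∀ x, IsPMF (W x)) (D : Set β) :
    prob (channelJoint P W) (Prod.snd ⁻¹' D) = prob (channelOutput P W) D := by
  have hs := (isPMF_channelJoint hP hW).2.summable.indicator (Prod.snd ⁻¹' D)
  rw [prob, prob, ← (Equiv.prodComm β α).tsum_eq]
  refine hs.prod_symm.tsum_prod.trans ?_
  refine tsum_congr fun y => ?_
  by_cases h : y ∈ D <;> simp [h, channelJoint, channelOutput]

lemma exists_sub_le_prob_section_diff (hP : IsPMF P) (hW : ∀ x, IsPMF (W x)) (A : Set (α × β))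
    (D : Set β) :
    ∃ x, prob (channelJoint P W) A - prob (channelOutput P W) D
      ≤ prob (W x) (Prod.mk x ⁻¹' A \ D) := by
  have hJ := isPMF_channelJoint hP hW
  obtain ⟨x, hx⟩ := hP.exists_ge_of_hasSum_mul
    (hasSum_mul_prob_section hP hW (A \ Prod.snd ⁻¹' D))
  have hdiff := prob_le_prob_diff_add hJ.1 hJ.2.summable A (Prod.snd ⁻¹' D)
  rw [prob_channelJoint_preimage_snd hP hW] at hdiff
  exact ⟨x, (sub_le_iff_le_add.2 hdiff).trans hx⟩

lemma prob_channelOutput_section_le (hP : IsPMF P) (hW : ∀ x, IsPMF (W x)) (ht : 0 ≤ t) (x : α) :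
    prob (channelOutput P W) (Prod.mk x ⁻¹' highDensityPairs P W t) ≤ t := by
  set B := Prod.mk x ⁻¹' highDensityPairs P W t
  have hle : prob (channelOutput P W) B ≤ t * prob (W x) B := by
    rw [prob, prob, ← tsum_mul_left]
    refine ((isPMF_channelOutput hP hW).2.summable.indicator B).tsum_le_tsum (fun y => ?_)
      (((hW x).2.summable.indicator B).mul_left t)
    by_cases hy : y ∈ B
    · rw [Set.indicator_of_mem hy, Set.indicator_of_mem hy]
      exact hy
    · rw [Set.indicator_of_notMem hy, Set.indicator_of_notMem hy, mul_zero]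
  exact hle.trans (mul_le_of_le_one_right ht ((hW x).prob_le_one B))

lemma exists_sub_card_mul_le_prob_section_diff (hP : IsPMF P) (hW : ∀ x, IsPMF (W x))
    (ht : 0 ≤ t) (F : Finset α) :
    ∃ x, prob (channelJoint P W) (highDensityPairs P W t) - F.card * t
      ≤ prob (W x) (Prod.mk x ⁻¹' highDensityPairs P W t \
          ⋃ u ∈ F, Prod.mk u ⁻¹' highDensityPairs P W t) := by
  set B : α → Set β := fun u => Prod.mk u ⁻¹' highDensityPairs P W t
  have hO := isPMF_channelOutput hP hW
  have hclaimed : prob (channelOutput P W) (⋃ u ∈ F, B u) ≤ F.card * t :=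
    calc prob (channelOutput P W) (⋃ u ∈ F, B u)
        ≤ ∑ u ∈ F, prob (channelOutput P W) (B u) :=
          prob_biUnion_finset_le hO.1 hO.2.summable F B
      _ ≤ F.card • t :=
          Finset.sum_le_card_nsmul _ _ _ fun u _ => prob_channelOutput_section_le hP hW ht u
      _ = F.card * t := nsmul_eq_mul _ _
  obtain ⟨x, hx⟩ := exists_sub_le_prob_section_diff hP hW (highDensityPairs P W t) (⋃ u ∈ F, B u)
  exact ⟨x, (sub_le_sub_left hclaimed _).trans hx⟩

end Channel

section Feinstein

variable {α β γ : Type*}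

lemma exists_seq_of_forall_finset [DecidableEq α] {r : Finset α → α → Prop}
    (h : ∀ F, ∃ x, r F x) :
    ∃ x : ℕ → α, ∀ n, r ((Finset.range n).image x) (x n) := by
  choose f hf using h
  let F : ℕ → Finset α := fun n => n.rec ∅ fun _ G => insert (f G) G
  have hF : ∀ n, F n = (Finset.range n).image (f ∘ F) := fun n => by
    induction n with
    | zero => rfl
    | succ n ih => rw [Finset.range_add_one, Finset.image_insert, ← ih]; rfl
  exact ⟨f ∘ F, fun n => hF n ▸ hf (F n)⟩

variable {P : α → ℝ} {W : α → β → ℝ} {t : ℝ}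

lemma exists_feinstein_codewords (hP : IsPMF P) (hW : ∀ x, IsPMF (W x)) (ht : 0 ≤ t) :
    ∃ (x : ℕ → α) (D : ℕ → Set β), Pairwise (Function.onFun Disjoint D) ∧
      ∀ n, prob (channelJoint P W) (highDensityPairs P W t) - n * t ≤ prob (W (x n)) (D n) := by
  classical
  obtain ⟨x, hx⟩ := exists_seq_of_forall_finset
    (exists_sub_card_mul_le_prob_section_diff hP hW ht)
  set B : ℕ → Set β := fun n => Prod.mk (x n) ⁻¹' highDensityPairs P W t with hB
  refine ⟨x, disjointed B, disjoint_disjointed B, fun n => ?_⟩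
  have hcard : (((Finset.range n).image x).card : ℝ) ≤ n := by
    exact_mod_cast Finset.card_image_le.trans_eq (Finset.card_range n)
  have hD : disjointed B n = B n \ ⋃ u ∈ (Finset.range n).image x,
      Prod.mk u ⁻¹' highDensityPairs P W t := by
    simp [disjointed_apply, hB]
  rw [hD]
  exact (sub_le_sub_left (mul_le_mul_of_nonneg_right hcard ht) _).trans (hx n)

lemma exists_decoder [Nonempty γ] {T : Set γ} {D : γ → Set β} (hD : T.PairwiseDisjoint D) :
    ∃ ψ : β → γ, ∀ v ∈ T, ∀ y ∈ D v, ψ y = v := by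
  have hunique : ∀ y, ∃ v, ∀ w ∈ T, y ∈ D w → v = w := fun y => by
    by_cases h : ∃ v ∈ T, y ∈ D v
    · obtain ⟨v, hv, hy⟩ := h
      exact ⟨v, fun w hw hyw => hD.elim_set hv hw y hy hyw⟩
    · exact ⟨Classical.arbitrary γ, fun w hw hyw => absurd ⟨w, hw, hyw⟩ h⟩
  choose ψ hψ using hunique
  exact ⟨ψ, fun v hv y hy => hψ y v hv hy⟩

lemma exists_code_of_finset [Nonempty γ] (hP : IsPMF P) (hW : ∀ x, IsPMF (W x)) (ht : 0 ≤ t)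
    (T : Finset γ) :
    ∃ (φ : γ → α) (ψ : β → γ), ∀ v ∈ T, prob (W (φ v)) {y | ψ y ≠ v} ≤
      prob (channelJoint P W) (highDensityPairs P W t)ᶜ + T.card * t := by
  classical
  obtain ⟨x, D, hdisj, hD⟩ := exists_feinstein_codewords hP hW ht
  let index : γ → ℕ := fun v => T.toList.idxOf v
  have hindex_inj : Set.InjOn index T := fun v hv w _ h =>
    (List.idxOf_inj (Finset.mem_toList.2 hv)).1 h
  have hindex_le : ∀ v, (index v : ℝ) ≤ T.card := fun v => by
    exact_mod_cast List.idxOf_le_length.trans_eq T.length_toList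
  obtain ⟨ψ, hψ⟩ := exists_decoder (T := (T : Set γ)) (D := D ∘ index)
    fun v hv w hw hvw => hdisj (hindex_inj.ne hv hw hvw)
  refine ⟨x ∘ index, ψ, fun v hv => ?_⟩
  have herr : prob (W (x (index v))) {y | ψ y ≠ v} ≤ prob (W (x (index v))) (D (index v))ᶜ :=
    prob_mono (hW _).1 (hW _).2.summable fun y hy hyD => hy (hψ v hv y hyD)
  have hcard := mul_le_mul_of_nonneg_right (hindex_le v) ht
  have hcompl := (hW (x (index v))).prob_add_prob_compl (D (index v))
  have hJ := (isPMF_channelJoint hP hW).prob_add_prob_compl (highDensityPairs P W t)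
  rw [Function.comp_apply]
  linarith [hD (index v)]

end Feinstein

section SourceChannel

variable {α β γ : Type*} {Q : γ → ℝ} {P : α → ℝ} {W : α → β → ℝ}

/-- Error probability of the code `(φ, ψ)` for the source `Q` and the channel `W` on arbitrary
alphabets; the one-shot form of `errProb`. -/
noncomputable def codeError (Q : γ → ℝ) (W : α → β → ℝ) (φ : γ → α) (ψ : β → γ) : ℝ :=
  ∑' v, Q v * prob (W (φ v)) {y | ψ y ≠ v}

lemma codeError_nonneg (hQ : ∀ v, 0 ≤ Q v) (hW : ∀ x y, 0 ≤ W x y) (φ : γ → α) (ψ : β → γ) :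
    0 ≤ codeError Q W φ ψ :=
  tsum_nonneg fun v => mul_nonneg (hQ v) (prob_nonneg (hW _) _)

lemma codeError_le_prob_add (hQ : IsPMF Q) (hW : ∀ x, IsPMF (W x)) {φ : γ → α} {ψ : β → γ}
    {S : Set γ} {δ : ℝ} (hδ : 0 ≤ δ) (h : ∀ v ∉ S, prob (W (φ v)) {y | ψ y ≠ v} ≤ δ) :
    codeError Q W φ ψ ≤ prob Q S + δ := by
  have hle_source : ∀ v, Q v * prob (W (φ v)) {y | ψ y ≠ v} ≤ Q v := fun v =>
    mul_le_of_le_one_right (hQ.1 v) ((hW _).prob_le_one _)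
  have hbound : HasSum (fun v => S.indicator Q v + Q v * δ) (prob Q S + 1 * δ) :=
    (hQ.2.summable.indicator S).hasSum.add (hQ.2.mul_right δ)
  have hsummable : Summable fun v => Q v * prob (W (φ v)) {y | ψ y ≠ v} :=
    hQ.2.summable.of_nonneg_of_le
      (fun v => mul_nonneg (hQ.1 v) (prob_nonneg (hW _).1 _)) hle_source
  rw [one_mul] at hbound
  refine hasSum_le (fun v => ?_) hsummable.hasSum hbound
  by_cases hv : v ∈ S
  · rw [Set.indicator_of_mem hv]
    exact (hle_source v).trans (le_add_of_nonneg_right (mul_nonneg (hQ.1 v) hδ))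
  · rw [Set.indicator_of_notMem hv, zero_add]
    exact mul_le_mul_of_nonneg_left (h v hv) (hQ.1 v)

lemma exists_codeError_le (hQ : IsPMF Q) (hP : IsPMF P) (hW : ∀ x, IsPMF (W x)) {s t : ℝ}
    (hs : 0 < s) (ht : 0 ≤ t) :
    ∃ (φ : γ → α) (ψ : β → γ), codeError Q W φ ψ ≤
      prob Q {v | Q v < s} + (prob (channelJoint P W) (highDensityPairs P W t)ᶜ + t / s) := by
  have := hQ.nonempty
  set T := (finite_setOf_le_of_summable hQ.2.summable hs).toFinset
  have hmem : ∀ v, v ∈ T ↔ s ≤ Q v := fun v => Set.Finite.mem_toFinset _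
  have hcard : T.card * t ≤ t / s := by
    rw [le_div_iff₀ hs, mul_right_comm]
    exact mul_le_of_le_one_left ht (hQ.card_mul_le_one fun v hv => (hmem v).1 hv)
  obtain ⟨φ, ψ, h⟩ := exists_code_of_finset hP hW ht T
  have hδ : 0 ≤ prob (channelJoint P W) (highDensityPairs P W t)ᶜ + t / s :=
    add_nonneg (prob_nonneg (isPMF_channelJoint hP hW).1 _) (div_nonneg ht hs.le)
  exact ⟨φ, ψ, codeError_le_prob_add hQ hW hδ fun v hv =>
    (h v ((hmem v).2 (not_lt.1 hv))).trans (add_le_add_right hcard _)⟩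

end SourceChannel

section Threshold

variable {α β γ : Type*}

lemma prob_lt_exp_neg_le {Q : γ → ℝ} (hQ : ∀ v, 0 ≤ Q v) (hs : Summable Q) {c : ℝ} (hc : 0 < c)
    (a : ℝ) :
    prob Q {v | Q v < exp (-(c * a))} ≤ prob Q {v | a < 1 / c * log (1 / Q v)} := by
  refine prob_le_prob_of_forall_pos hQ hs fun v hv hpos => ?_
  have hlog : log (Q v) < -(c * a) := (log_lt_iff_lt_exp hpos).2 hv
  rw [Set.mem_ofPred_eq, one_div, one_div, log_inv, inv_mul_eq_div, lt_div_iff₀' hc]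
  exact lt_neg_of_lt_neg hlog

lemma prob_compl_highDensityPairs_le {P : α → ℝ} {W : α → β → ℝ} (hP : IsPMF P)
    (hW : ∀ x, IsPMF (W x)) {c : ℝ} (hc : 0 < c) (b : ℝ) :
    prob (channelJoint P W) (highDensityPairs P W (exp (-(c * b))))ᶜ ≤
      prob (channelJoint P W) {z | 1 / c * log (W z.1 z.2 / channelOutput P W z.2) < b} := by
  have hJ := isPMF_channelJoint hP hW
  refine prob_le_prob_of_forall_pos hJ.1 hJ.2.summable fun z hz hpos => ?_
  have hWpos : 0 < W z.1 z.2 := pos_of_mul_pos_right hpos (hP.1 z.1)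
  have hlow : exp (-(c * b)) * W z.1 z.2 < channelOutput P W z.2 := not_le.1 hz
  have hOpos : 0 < channelOutput P W z.2 := (mul_pos (exp_pos _) hWpos).trans hlow
  rw [Set.mem_ofPred_eq, one_div, inv_mul_eq_div, div_lt_iff₀' hc,
    log_lt_iff_lt_exp (div_pos hWpos hOpos), div_lt_iff₀ hOpos]
  rwa [exp_neg, inv_mul_lt_iff₀ (exp_pos _)] at hlow

end Threshold

section Spectral

variable {α : ℕ → Type*} {p : (i : ℕ) → α i → ℝ} {Z : (i : ℕ) → α i → ℝ}

lemma tendsto_prob_gt_of_plimsup_lt (hp : ∀ i, IsPMF (p i)) {a : ℝ}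
    (h : plimsup p Z < (a : EReal)) :
    Tendsto (fun i => prob (p i) {x | a < Z i x}) atTop (𝓝 0) := by
  obtain ⟨β, hβ, hβa⟩ := sInf_lt_iff.1 h
  exact squeeze_zero (fun i => prob_nonneg (hp i).1 _)
    (fun i => prob_mono (hp i).1 (hp i).2.summable fun x hx =>
      hβa.trans (EReal.coe_lt_coe_iff.2 hx)) hβ

lemma tendsto_prob_lt_of_lt_pliminf (hp : ∀ i, IsPMF (p i)) {b : ℝ}
    (h : (b : EReal) < pliminf p Z) :
    Tendsto (fun i => prob (p i) {x | Z i x < b}) atTop (𝓝 0) := by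
  obtain ⟨β, hβ, hbβ⟩ := lt_sSup_iff.1 h
  exact squeeze_zero (fun i => prob_nonneg (hp i).1 _)
    (fun i => prob_mono (hp i).1 (hp i).2.summable fun x hx =>
      (EReal.coe_lt_coe_iff.2 hx).trans hbβ) hβ

lemma tendsto_exp_neg_div_exp_neg {a b : ℝ} (hab : a < b) :
    Tendsto (fun n : ℕ => exp (-(n * b)) / exp (-(n * a))) atTop (𝓝 0) := by
  have hrate : Tendsto (fun n : ℕ => (n : ℝ) * (b - a)) atTop atTop :=
    tendsto_natCast_atTop_atTop.atTop_mul_const (sub_pos.2 hab)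
  refine (tendsto_exp_neg_atTop_nhds_zero.comp hrate).congr fun n => ?_
  rw [Function.comp_apply, ← exp_sub]
  ring_nf

end Spectral

theorem separation_direct_part_general {𝒱 𝒳 𝒴 : Type*}
    (PV : (n : ℕ) → Word 𝒱 n → ℝ) (hPV : ∀ n, IsPMF (PV n))
    (W : (n : ℕ) → Word 𝒳 n → Word 𝒴 n → ℝ) (hW : ∀ n x, IsPMF (W n x))
    (hlt : ∃ PX : (n : ℕ) → Word 𝒳 n → ℝ, (∀ n, IsPMF (PX n)) ∧ Hbar PV < Ilow PX W) :
    Transmissible PV W := by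
  obtain ⟨PX, hPX, hlt⟩ := hlt
  obtain ⟨a, hVa, haI⟩ := EReal.lt_iff_exists_real_btwn.1 hlt
  obtain ⟨b, hab, hbI⟩ := EReal.lt_iff_exists_real_btwn.1 haI
  have hsource := tendsto_prob_gt_of_plimsup_lt hPV hVa
  have hdensity := tendsto_prob_lt_of_lt_pliminf (fun n => isPMF_channelJoint (hPX n) (hW n)) hbI
  have hrate := tendsto_exp_neg_div_exp_neg (EReal.coe_lt_coe_iff.1 hab)
  have hbound := hsource.add (hdensity.add hrate)
  simp only [add_zero] at hbound
  choose φ ψ hcode using fun n : ℕ => exists_codeError_le (hPV n) (hPX n) (hW n)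
    (exp_pos (-(n * a))) (exp_pos (-(n * b))).le
  refine ⟨φ, ψ, squeeze_zero'
    (.of_forall fun n => codeError_nonneg (hPV n).1 (fun x => (hW n x).1) _ _) ?_ hbound⟩
  filter_upwards [eventually_gt_atTop 0] with n hn
  have hn_pos : (0 : ℝ) < n := Nat.cast_pos.2 hn
  exact (hcode n).trans (add_le_add
    (prob_lt_exp_neg_le (hPV n).1 (hPV n).2.summable hn_pos a)
    (add_le_add_left (prob_compl_highDensityPairs_le (hPX n) (hW n) hn_pos b) _))

/-- **Separation theorem, direct part** (Theorem 6.5, part 1, spectral form). -/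
theorem separation_direct_part
    {𝒱 𝒳 𝒴 : Type} [Countable 𝒱] [Countable 𝒳] [Countable 𝒴]
    (PV : (n : ℕ) → Word 𝒱 n → ℝ) (hPV : ∀ n, IsPMF (PV n))
    (W : (n : ℕ) → Word 𝒳 n → Word 𝒴 n → ℝ) (hW : ∀ n x, IsPMF (W n x))
    (hlt : ∃ PX : (n : ℕ) → Word 𝒳 n → ℝ, (∀ n, IsPMF (PX n)) ∧
      Hbar PV < Ilow PX W) :
    Transmissible PV W :=
  separation_direct_part_general PV hPV W hW hlt

end ISC
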